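/- arXiv:1608.07344 — 4 statements merged into one kernel-verified Lean document; each statement's English description precedes it below -/
import Mathlib

section
/- There exists a continuous function f : [0,1] → [0,1] such that for every α with 0 < α ≤ 1, I_α(f) = {1 − 3/2^{i+1} : i ∈ ℕ, i ≥ 1} = {1/4, 5/8, 13/16, …}; in particular I_α(f) is countably infinite and dim_H(I_α(f)) = 0, while for each point y of this set the level set f⁻¹(y) contains a nondegenerate interval and hence has Hausdorff dimension 1. -/
open Set MeasureTheory

/-!
Passing to `t = 1 - x` and `s = 1 - y`, the distinguished values are `s = (3/4) * 2 ^ (-n)` with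
`n ∈ ℕ`. On the logarithmic scale `u = - log₂ t` they correspond to the natural numbers, so a
continuous staircase `P : ℝ → ℝ`, constant equal to `n` on each `[n, n + 1/2]` and affine of
slope `2` on each `[n + 1/2, n + 1]`, does the job: `P` is injective over the non-integers, whereas
the fibre over an integer contains an interval. The function is
`f x = 1 - (3/4) * 2 ^ (-P (- log₂ (1 - x)))`, with `f 1 = 1`. Since `P u - u` is bounded, the
subtracted term is `O(1 - x)`, which gives continuity at `x = 1`. Every fibre of `f` over a
non-distinguished value has at most one point, hence dimension `0`, and every fibre over a
distinguished value has nonempty interior, hence dimension `1`.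
-/

namespace LevelSets

/-- The deviation `P u - u` of the staircase from the identity, as a function of the fractional
part of `u`. -/
noncomputable def bump (r : ℝ) : ℝ := max 0 (2 * r - 1) - r

/-- The continuous staircase, equal to `n` on `[n, n + 1/2]` and affine on `[n + 1/2, n + 1]` for
each integer `n`. -/
noncomputable def stair (u : ℝ) : ℝ := u + bump (Int.fract u)

/-- The function `t ↦ (3/4) * 2 ^ (-stair (-log₂ t))` for `t > 0`, written with a factor `t` so that
it takes the value `0` at `t = 0` (where `logb 2 0 = 0` is a junk value). -/
noncomputable def height (t : ℝ) : ℝ :=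
  3 / 4 * (t * (2 : ℝ) ^ (-bump (Int.fract (-Real.logb 2 t))))

lemma stair_eq (u : ℝ) : stair u = ⌊u⌋ + max 0 (2 * Int.fract u - 1) := by
  have := Int.floor_add_fract u
  unfold stair bump
  linarith

lemma continuous_bump_fract : Continuous fun u : ℝ => bump (Int.fract u) := by
  have hb : Continuous bump := by unfold bump; fun_prop
  exact ContinuousOn.comp_fract'' hb.continuousOn (by norm_num [bump])

lemma floor_stair (u : ℝ) : ⌊stair u⌋ = ⌊u⌋ := by
  rw [stair_eq, Int.floor_intCast_add, add_eq_left, Int.floor_eq_iff]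
  have := Int.fract_lt_one u
  constructor
  · simp
  · simp; linarith

lemma stair_eq_natCast {u : ℝ} {n : ℕ} (h : (n : ℝ) ≤ u) (h' : u ≤ n + 1 / 2) :
    stair u = n := by
  have hf : ⌊u⌋ = (n : ℤ) := by
    rw [Int.floor_eq_iff]
    push_cast
    constructor <;> linarith
  have := Int.floor_add_fract u
  rw [hf] at this
  push_cast at this
  rw [stair_eq, hf, max_eq_left (by linarith)]
  simp

/-- The staircase is injective over the non-integers. -/
lemma stair_injective {u w : ℝ} (h : stair u = stair w) (hu : stair u ≠ ⌊u⌋) : u = w := by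
  have hfl : ⌊u⌋ = ⌊w⌋ := by rw [← floor_stair u, ← floor_stair w, h]
  have hw : stair w ≠ ⌊w⌋ := by rw [← h, ← hfl]; exact hu
  have h1 := Int.floor_add_fract u
  have h2 := Int.floor_add_fract w
  rw [stair_eq] at hu hw
  rw [stair_eq, stair_eq, hfl] at h
  rw [hfl] at h1
  rcases max_cases (0 : ℝ) (2 * Int.fract u - 1) with ⟨e, -⟩ | ⟨e, -⟩
  · exact absurd (by rw [e, add_zero]) hu
  rcases max_cases (0 : ℝ) (2 * Int.fract w - 1) with ⟨e', -⟩ | ⟨e', -⟩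
  · exact absurd (by rw [e', add_zero]) hw
  rw [e, e'] at h
  linarith

lemma height_zero : height 0 = 0 := by simp [height]

lemma height_of_pos {t : ℝ} (ht : 0 < t) :
    height t = 3 / 4 * (2 : ℝ) ^ (-stair (-Real.logb 2 t)) := by
  have h : -stair (-Real.logb 2 t)
      = Real.logb 2 t + -bump (Int.fract (-Real.logb 2 t)) := by
    unfold stair; ring
  rw [h, Real.rpow_add two_pos, Real.rpow_logb two_pos (by norm_num) ht, height]

lemma height_pos {t : ℝ} (ht : 0 < t) : 0 < height t := by
  unfold height; positivity

lemma continuous_height : Continuous height := by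
  rw [continuous_iff_continuousAt]
  intro t
  rcases eq_or_ne t 0 with rfl | ht
  · -- At `0` the power of `2` stays bounded, because `-1 ≤ bump r` for `r < 1`.
    have hbd : ∀ t : ℝ, ‖height t‖ ≤ 3 / 2 * ‖t‖ := by
      intro t
      have hr := Int.fract_lt_one (-Real.logb 2 t)
      have hb : -bump (Int.fract (-Real.logb 2 t)) ≤ 1 := by
        unfold bump
        have := le_max_left 0 (2 * Int.fract (-Real.logb 2 t) - 1)
        linarith
      have h2 := Real.rpow_le_rpow_of_exponent_le (one_le_two (α := ℝ)) hb
      rw [Real.rpow_one] at h2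
      have h0 : (0 : ℝ) ≤ 2 ^ (-bump (Int.fract (-Real.logb 2 t))) := by positivity
      rw [height, norm_mul, norm_mul, Real.norm_of_nonneg h0,
        Real.norm_of_nonneg (by norm_num : (0 : ℝ) ≤ 3 / 4)]
      nlinarith [mul_le_mul_of_nonneg_left h2 (norm_nonneg t)]
    rw [ContinuousAt, height_zero]
    refine squeeze_zero_norm hbd ?_
    have : Continuous fun t : ℝ => 3 / 2 * ‖t‖ := by fun_prop
    simpa using this.tendsto 0
  · have hl : ContinuousAt (fun t : ℝ => -Real.logb 2 t) t := by
      unfold Real.logb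
      exact ((Real.continuousAt_log ht).div_const _).neg
    have hc : ContinuousAt (fun t : ℝ => bump (Int.fract (-Real.logb 2 t))) t :=
      ContinuousAt.comp (f := fun t : ℝ => -Real.logb 2 t)
        continuous_bump_fract.continuousAt hl
    unfold height
    exact continuousAt_const.mul
      (continuousAt_id.mul (continuousAt_const.rpow hc.neg (Or.inl two_ne_zero)))

lemma neg_logb_nonneg {t : ℝ} (ht : 0 < t) (ht1 : t ≤ 1) : 0 ≤ -Real.logb 2 t := by
  have := Real.logb_nonpos one_lt_two ht.le ht1
  linarith

lemma height_mem {t : ℝ} (h0 : 0 ≤ t) (h1 : t ≤ 1) : height t ∈ Icc (0 : ℝ) 1 := by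
  rcases h0.eq_or_lt with rfl | h0
  · simp [height_zero]
  refine ⟨(height_pos h0).le, ?_⟩
  have hs : 0 ≤ stair (-Real.logb 2 t) := by
    have : 0 ≤ ⌊-Real.logb 2 t⌋ := Int.floor_nonneg.2 (neg_logb_nonneg h0 h1)
    rw [stair_eq]
    positivity
  have := Real.rpow_le_one_of_one_le_of_nonpos (one_le_two (α := ℝ)) (neg_nonpos.2 hs)
  rw [height_of_pos h0]
  linarith

/-- A value that is attained twice by `height` on `[0, 1]` is of the form `3 / 2 ^ (i + 1)` with
`i ≥ 1`. -/
lemma height_injective {t s : ℝ} (ht : t ∈ Icc (0 : ℝ) 1) (hs : s ∈ Icc (0 : ℝ) 1)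
    (h : height t = height s) (hv : ∀ i : ℕ, 1 ≤ i → height t ≠ 3 / 2 ^ (i + 1)) : t = s := by
  rcases ht.1.eq_or_lt with rfl | ht0
  · rcases hs.1.eq_or_lt with rfl | hs0
    · rfl
    · rw [height_zero] at h
      exact absurd h (height_pos hs0).ne
  rcases hs.1.eq_or_lt with rfl | hs0
  · rw [height_zero] at h
    exact absurd h (height_pos ht0).ne'
  have hst : stair (-Real.logb 2 t) = stair (-Real.logb 2 s) := by
    rw [height_of_pos ht0, height_of_pos hs0] at h
    have h' := mul_left_cancel₀ (by norm_num) h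
    have := (Real.rpow_right_inj two_pos (by norm_num)).1 h'
    linarith
  have hne : stair (-Real.logb 2 t) ≠ ⌊-Real.logb 2 t⌋ := by
    intro he
    obtain ⟨n, hn⟩ := Int.eq_ofNat_of_zero_le (Int.floor_nonneg.2 (neg_logb_nonneg ht0 ht.2))
    apply hv (n + 1) (by omega)
    rw [height_of_pos ht0, he, hn, Int.cast_natCast, Real.rpow_neg two_pos.le,
      Real.rpow_natCast]
    field_simp
    ring
  have hl := neg_injective (stair_injective hst hne)
  exact Real.logb_injOn_pos one_lt_two ht0 hs0 hl

lemma height_eq_of_mem {n : ℕ} {t : ℝ} (h : (2 : ℝ) ^ (-(n + 1 / 2 : ℝ)) ≤ t)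
    (h' : t ≤ (2 : ℝ) ^ (-(n : ℝ))) : height t = 3 / 4 * (2 ^ n)⁻¹ := by
  have ht : 0 < t := lt_of_lt_of_le (by positivity) h
  have h1 := (Real.le_logb_iff_rpow_le one_lt_two ht).2 h
  have h2 := (Real.logb_le_iff_le_rpow one_lt_two ht).2 h'
  rw [height_of_pos ht, stair_eq_natCast (n := n) (by linarith) (by linarith),
    Real.rpow_neg two_pos.le, Real.rpow_natCast]

lemma exists_Icc_subset {i : ℕ} (hi : 1 ≤ i) :
    ∃ p q : ℝ, p < q ∧
      Icc p q ⊆ {x ∈ Icc (0 : ℝ) 1 | 1 - height (1 - x) = 1 - 3 / 2 ^ (i + 1)} := by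
  obtain ⟨n, rfl⟩ := Nat.exists_eq_add_of_le' hi
  refine ⟨1 - (2 : ℝ) ^ (-(n : ℝ)), 1 - (2 : ℝ) ^ (-(n + 1 / 2 : ℝ)), ?_, ?_⟩
  · have : (2 : ℝ) ^ (-(n + 1 / 2 : ℝ)) < (2 : ℝ) ^ (-(n : ℝ)) :=
      Real.rpow_lt_rpow_of_exponent_lt one_lt_two (by linarith)
    linarith
  · rintro x ⟨hx1, hx2⟩
    have h0 : (0 : ℝ) < 2 ^ (-(n + 1 / 2 : ℝ)) := by positivity
    have h1 : (2 : ℝ) ^ (-(n : ℝ)) ≤ 1 :=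
      Real.rpow_le_one_of_one_le_of_nonpos one_le_two (by simp)
    refine ⟨⟨by linarith, by linarith⟩, ?_⟩
    rw [height_eq_of_mem (n := n) (by linarith) (by linarith)]
    field_simp
    ring

lemma dimH_eq_one_of_Icc_subset {s : Set ℝ} {p q : ℝ} (hpq : p < q) (h : Icc p q ⊆ s) :
    dimH s = 1 := by
  have hI : (interior (Icc p q)).Nonempty := by rw [interior_Icc]; exact nonempty_Ioo.2 hpq
  rw [Real.dimH_of_nonempty_interior (hI.mono (interior_mono h)), Module.finrank_self,
    Nat.cast_one]

lemma values_eq_image : {y : ℝ | ∃ i : ℕ, 1 ≤ i ∧ y = 1 - 3 / 2 ^ (i + 1)} =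
    (fun i : ℕ => (1 - 3 / 2 ^ (i + 1) : ℝ)) '' Ici 1 := by
  ext y
  simp only [mem_ofPred_eq, mem_image, mem_Ici, eq_comm]

lemma countable_values : {y : ℝ | ∃ i : ℕ, 1 ≤ i ∧ y = 1 - 3 / 2 ^ (i + 1)}.Countable := by
  rw [values_eq_image]
  exact (to_countable _).image _

lemma infinite_values : {y : ℝ | ∃ i : ℕ, 1 ≤ i ∧ y = 1 - 3 / 2 ^ (i + 1)}.Infinite := by
  rw [values_eq_image]
  refine (Ici_infinite 1).image (Function.Injective.injOn ?_)
  intro i j h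
  have h' : (2 : ℝ) ^ (i + 1) = 2 ^ (j + 1) := by
    field_simp at h
    linarith
  have := pow_right_injective₀ (two_pos (α := ℝ)) (by norm_num) h'
  simpa using this

end LevelSets

open LevelSets in
/-- There exists a continuous `f : [0,1] → [0,1]` such that for every
`0 < α ≤ 1`, `I_α(f) = {1 - 3/2^(i+1) : i ∈ ℕ, i ≥ 1} = {1/4, 5/8, 13/16, …}`;
in particular `I_α(f)` is countably infinite with Hausdorff dimension 0, while for each `y`
in this set the level set `f⁻¹(y)` contains a nondegenerate interval and hence has
Hausdorff dimension 1. -/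
theorem exists_continuous_countable_full_levelSets :
    ∃ f : ℝ → ℝ, ContinuousOn f (Set.Icc 0 1) ∧
      Set.MapsTo f (Set.Icc 0 1) (Set.Icc 0 1) ∧
      ∀ α : ℝ, 0 < α → α ≤ 1 →
        {y ∈ Set.Icc (0:ℝ) 1 |
            ENNReal.ofReal α ≤ dimH {x ∈ Set.Icc (0:ℝ) 1 | f x = y}} =
          {y : ℝ | ∃ i : ℕ, 1 ≤ i ∧ y = 1 - 3 / 2 ^ (i + 1)} ∧
        Set.Countable {y : ℝ | ∃ i : ℕ, 1 ≤ i ∧ y = 1 - 3 / 2 ^ (i + 1)} ∧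
        Set.Infinite {y : ℝ | ∃ i : ℕ, 1 ≤ i ∧ y = 1 - 3 / 2 ^ (i + 1)} ∧
        dimH {y : ℝ | ∃ i : ℕ, 1 ≤ i ∧ y = 1 - 3 / 2 ^ (i + 1)} = 0 ∧
        ∀ y ∈ {y : ℝ | ∃ i : ℕ, 1 ≤ i ∧ y = 1 - 3 / 2 ^ (i + 1)},
          (∃ p q : ℝ, p < q ∧ Set.Icc p q ⊆ {x ∈ Set.Icc (0:ℝ) 1 | f x = y}) ∧
          dimH {x ∈ Set.Icc (0:ℝ) 1 | f x = y} = 1 := by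
  have hmaps : MapsTo (fun x => 1 - height (1 - x)) (Icc (0 : ℝ) 1) (Icc 0 1) := by
    intro x hx
    obtain ⟨h0, h1⟩ := height_mem (t := 1 - x) (by linarith [hx.2]) (by linarith [hx.1])
    exact ⟨by linarith, by linarith⟩
  have hfull : ∀ y ∈ {y : ℝ | ∃ i : ℕ, 1 ≤ i ∧ y = 1 - 3 / 2 ^ (i + 1)},
      (∃ p q : ℝ, p < q ∧ Icc p q ⊆ {x ∈ Icc (0:ℝ) 1 | 1 - height (1 - x) = y}) ∧
      dimH {x ∈ Icc (0:ℝ) 1 | 1 - height (1 - x) = y} = 1 := by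
    rintro y ⟨i, hi, rfl⟩
    obtain ⟨p, q, hpq, h⟩ := exists_Icc_subset hi
    exact ⟨⟨p, q, hpq, h⟩, dimH_eq_one_of_Icc_subset hpq h⟩
  refine ⟨fun x => 1 - height (1 - x), ?_, hmaps, fun α hα hα1 =>
    ⟨?_, countable_values, infinite_values, countable_values.dimH_zero, hfull⟩⟩
  · exact (continuous_const.sub
      (continuous_height.comp (continuous_const.sub continuous_id))).continuousOn
  ext y
  constructor
  · rintro ⟨-, hy⟩
    by_contra hyS
    have hsub : {x ∈ Icc (0:ℝ) 1 | 1 - height (1 - x) = y}.Subsingleton := by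
      rintro a ⟨ha, hay⟩ b ⟨hb, hby⟩
      have := height_injective (t := 1 - a) (s := 1 - b)
        ⟨by linarith [ha.2], by linarith [ha.1]⟩ ⟨by linarith [hb.2], by linarith [hb.1]⟩
        (by linarith) (fun i hi h => hyS ⟨i, hi, by rw [← h, hay]⟩)
      linarith
    rw [hsub.dimH_zero, nonpos_iff_eq_zero, ENNReal.ofReal_eq_zero] at hy
    linarith
  · intro hy
    obtain ⟨⟨p, q, hpq, h⟩, hd⟩ := hfull y hy
    obtain ⟨hp, hpy⟩ := h (left_mem_Icc.2 hpq.le)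
    refine ⟨hpy ▸ hmaps hp, ?_⟩
    rw [hd]
    exact ENNReal.ofReal_le_one.2 hα1
end

section
/- For every natural number k, ∑_{i=0}^{k} C(k,i) · (−1)^i / (k + 1 + i) = (k!)² / (2k + 1)!, where C(k,i) denotes the binomial coefficient. -/
/-!
The sum is the Beta integral `∫₀¹ x ^ k (1 - x) ^ k dx`, expanded by the binomial theorem. More
generally, `∑ i, C(n,i) (-1)^i / (m+1+i) = n! m! / (n+m+1)!`, the value of the Beta function at
`(m+1, n+1)`. With the exponents `n` and `m` independent, this follows by induction on `n`: by
Pascal's rule the sum `S(n, m)` satisfies `S(n+1, m) = S(n, m) - S(n, m+1)`, and so does the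
right-hand side. The diagonal `n = m = k` is the claim.
-/

/-- The value of the Beta function at `(m+1, n+1)`, with its integrand expanded binomially. -/
theorem sum_choose_alternating_inv_eq_beta (n m : ℕ) :
    ∑ i ∈ Finset.range (n + 1),
        (n.choose i : ℝ) * ((-1) ^ i / ((m + 1 + i : ℕ) : ℝ)) =
      (n.factorial : ℝ) * m.factorial / ((n + m + 1).factorial : ℝ) := by
  induction n generalizing m with
  | zero =>
    have hm : (m.factorial : ℝ) ≠ 0 := by positivity
    simp [Nat.factorial_succ]
    field_simp
  | succ n ih =>
    have pascal := Finset.sum_choose_succ_mul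
      (fun i _ => (-1 : ℝ) ^ i / ((m + 1 + i : ℕ) : ℝ)) n
    have shift : ∑ i ∈ Finset.range (n + 1),
        (n.choose i : ℝ) * ((-1) ^ (i + 1) / ((m + 1 + (i + 1) : ℕ) : ℝ)) =
        -∑ i ∈ Finset.range (n + 1),
          (n.choose i : ℝ) * ((-1) ^ i / ((m + 1 + 1 + i : ℕ) : ℝ)) := by
      rw [← Finset.sum_neg_distrib]
      refine Finset.sum_congr rfl fun i _ => ?_
      rw [show m + 1 + (i + 1) = m + 1 + 1 + i by omega, pow_succ]
      ring
    rw [shift, ih m, ih (m + 1)] at pascal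
    rw [pascal, show n + (m + 1) + 1 = n + m + 1 + 1 by omega,
      show n + 1 + m + 1 = n + m + 1 + 1 by omega, Nat.factorial_succ (n + m + 1),
      Nat.factorial_succ n, Nat.factorial_succ m]
    have h : ((n + m + 1).factorial : ℝ) ≠ 0 := by positivity
    push_cast
    field_simp
    ring

/-- For every natural number `k`,
`∑_{i=0}^{k} C(k,i)·(−1)^i/(k+1+i) = (k!)²/(2k+1)!`. -/
theorem sum_choose_alternating_inv_eq (k : ℕ) :
    ∑ i ∈ Finset.range (k + 1),
        (k.choose i : ℝ) * (-1) ^ i / ((k + 1 + i : ℕ) : ℝ) =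
      ((k.factorial : ℝ)) ^ 2 / ((2 * k + 1).factorial : ℝ) := by
  simp only [mul_div_assoc]
  rw [sum_choose_alternating_inv_eq_beta, two_mul, sq]
end

section
/- Fix a natural number k and define the polynomial function g : ℝ → ℝ by g(x) = ((2k+1)!/(k!)²) · ∑_{i=0}^{k} C(k,i) · ((−1)^i/(k+1+i)) · x^{k+1+i}. Then: (1) g(0) = 0 and g(1) = 1; (2) the derivative of g satisfies g'(x) = ((2k+1)!/(k!)²) · x^k (1−x)^k for all x ∈ ℝ; (3) g is monotone nondecreasing on [0,1]; and (4) for every j with 1 ≤ j ≤ k, the j-th derivative of g vanishes at both 0 and 1, i.e. g^{(j)}(0) = g^{(j)}(1) = 0. -/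
/-!
The function `g` is the normalized incomplete Beta function: expanding `(1 - x)^k` by the binomial
theorem and differentiating term by term gives `g' = c x^k (1 - x)^k`, which is nonnegative on
`[0, 1]`. Since `x^k` and `(1 - x)^k` divide the polynomial `g'`, each of its derivatives of order
less than `k` still vanishes at `0` and `1`. The value `g 1 = 1` is the Beta integral
`B(k + 1, k + 1) = (k!)² / (2k + 1)!`, proved in the form of an alternating binomial sum
(`sum_choose_alternating_div`) by induction using Pascal's rule.
-/

/-- The Beta integral `B(m + 1, n + 1)`, written as the alternating sum obtained by expanding
`(1 - x)^n` and integrating over `[0, 1]`. -/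
lemma sum_choose_alternating_div (n m : ℕ) :
    ∑ i ∈ Finset.range (n + 1), (n.choose i : ℝ) * ((-1) ^ i / ((m + 1 + i : ℕ) : ℝ)) =
      (n.factorial * m.factorial : ℝ) / (m + n + 1).factorial := by
  induction n generalizing m with
  | zero =>
    simp [Nat.factorial_succ]
    field_simp
  | succ n ih =>
    have h := Finset.sum_choose_succ_mul
      (fun i _ => ((-1 : ℝ) ^ i / ((m + 1 + i : ℕ) : ℝ))) n
    -- With `S n m` the sum on the left-hand side, Pascal's rule gives
    -- `S (n + 1) m = S n m - S n (m + 1)`.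
    have h2 : ∑ i ∈ Finset.range (n + 1),
        (n.choose i : ℝ) * ((-1) ^ (i + 1) / ((m + 1 + (i + 1) : ℕ) : ℝ)) =
        -∑ i ∈ Finset.range (n + 1),
          (n.choose i : ℝ) * ((-1) ^ i / ((m + 1 + 1 + i : ℕ) : ℝ)) := by
      rw [← Finset.sum_neg_distrib]
      refine Finset.sum_congr rfl fun i _ => ?_
      rw [show m + 1 + (i + 1) = m + 1 + 1 + i by ring, pow_succ]
      ring
    rw [h2, ih, ih] at h
    refine h.trans ?_
    rw [show m + 1 + n + 1 = m + n + 1 + 1 by ring, show m + (n + 1) + 1 = m + n + 1 + 1 by ring,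
      Nat.factorial_succ (m + n + 1), Nat.factorial_succ n, Nat.factorial_succ m]
    have : ((m + n + 1).factorial : ℝ) ≠ 0 := by positivity
    have : ((m : ℝ) + n + 1 + 1) ≠ 0 := by positivity
    push_cast
    field_simp
    ring

/-- A derivative of order `j < k` of a polynomial divisible by `p ^ k` vanishes at every root
of `p`. -/
lemma iteratedDeriv_eval_eq_zero {p q : Polynomial ℝ} {k j : ℕ} {a : ℝ} (hj : j < k)
    (hpq : p ^ k ∣ q) (ha : p.eval a = 0) : iteratedDeriv j (fun x => q.eval x) a = 0 := by
  have hiter : ∀ n : ℕ, iteratedDeriv n (fun x => q.eval x) =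
      fun x => (Polynomial.derivative^[n] q).eval x := by
    intro n
    induction n with
    | zero => simp
    | succ n ih =>
      rw [iteratedDeriv_succ, ih, Function.iterate_succ_apply']
      ext x
      exact Polynomial.deriv _
  rw [hiter]
  obtain ⟨r, hr⟩ := Polynomial.pow_sub_dvd_iterate_derivative_of_pow_dvd j hpq
  have : k - j ≠ 0 := by omega
  simp [hr, ha, this]

open Set

/-- For the polynomial
`g(x) = ((2k+1)!/(k!)²) · ∑_{i=0}^{k} C(k,i)·((−1)^i/(k+1+i))·x^{k+1+i}`:
(1) `g(0) = 0` and `g(1) = 1`; (2) `g'(x) = ((2k+1)!/(k!)²)·x^k(1−x)^k` for all `x`;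
(3) `g` is monotone nondecreasing on `[0,1]`; (4) for every `1 ≤ j ≤ k`, the `j`-th
derivative of `g` vanishes at `0` and `1`. -/
theorem flat_polynomial_properties (k : ℕ) (g : ℝ → ℝ)
    (hg : ∀ x : ℝ, g x = (((2 * k + 1).factorial : ℝ) / ((k.factorial : ℝ)) ^ 2) *
        ∑ i ∈ Finset.range (k + 1),
          (k.choose i : ℝ) * ((-1) ^ i / ((k + 1 + i : ℕ) : ℝ)) * x ^ (k + 1 + i)) :
    g 0 = 0 ∧ g 1 = 1 ∧
    (∀ x : ℝ, deriv g x =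
      (((2 * k + 1).factorial : ℝ) / ((k.factorial : ℝ)) ^ 2) * x ^ k * (1 - x) ^ k) ∧
    MonotoneOn g (Set.Icc 0 1) ∧
    (∀ j : ℕ, 1 ≤ j → j ≤ k → iteratedDeriv j g 0 = 0 ∧ iteratedDeriv j g 1 = 0) := by
  set c : ℝ := ((2 * k + 1).factorial : ℝ) / ((k.factorial : ℝ)) ^ 2 with hc
  have hc0 : 0 ≤ c := by positivity
  have hd : ∀ x : ℝ, HasDerivAt g (c * x ^ k * (1 - x) ^ k) x := by
    intro x
    rw [funext hg]
    have hsum := (HasDerivAt.fun_sum (u := Finset.range (k + 1))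
      (A := fun i (y : ℝ) => (k.choose i : ℝ) * ((-1) ^ i / ((k + 1 + i : ℕ) : ℝ)) *
        y ^ (k + 1 + i)) fun i _ =>
      (hasDerivAt_pow (k + 1 + i) x).const_mul
        ((k.choose i : ℝ) * ((-1) ^ i / ((k + 1 + i : ℕ) : ℝ)))).const_mul c
    refine hsum.congr_deriv ?_
    rw [mul_assoc]
    congr 1
    rw [show (1 - x) = -x + 1 by ring, add_pow, Finset.mul_sum]
    refine Finset.sum_congr rfl fun i _ => ?_
    have : ((k + 1 + i : ℕ) : ℝ) ≠ 0 := by positivity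
    rw [show k + 1 + i - 1 = k + i by omega, neg_pow x, one_pow, pow_add]
    field_simp
  have hderiv : ∀ x : ℝ, deriv g x = c * x ^ k * (1 - x) ^ k := fun x => (hd x).deriv
  refine ⟨?_, ?_, hderiv, ?_, ?_⟩
  · rw [hg]
    simp
  · rw [hg]
    simp only [one_pow, mul_one]
    rw [sum_choose_alternating_div, hc, show k + k + 1 = 2 * k + 1 by ring]
    field_simp
  · refine monotoneOn_of_deriv_nonneg (convex_Icc 0 1)
      (fun x _ => (hd x).continuousAt.continuousWithinAt)
      (fun x _ => (hd x).differentiableAt.differentiableWithinAt) fun x hx => ?_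
    rw [interior_Icc] at hx
    have h0 : 0 ≤ x := hx.1.le
    have h1 : 0 ≤ 1 - x := sub_nonneg.2 hx.2.le
    rw [hderiv]
    positivity
  · intro j hj1 hjk
    obtain ⟨j, rfl⟩ : ∃ l, j = l + 1 := ⟨j - 1, by omega⟩
    have hp : deriv g = fun x =>
        (Polynomial.C c * Polynomial.X ^ k * (1 - Polynomial.X) ^ k : Polynomial ℝ).eval x := by
      ext x
      simp [hderiv]
    rw [iteratedDeriv_succ', hp]
    exact ⟨iteratedDeriv_eval_eq_zero (p := Polynomial.X) hjk
        ((dvd_mul_left _ _).mul_right _) (by simp),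
      iteratedDeriv_eval_eq_zero (p := 1 - Polynomial.X) hjk (dvd_mul_left _ _) (by simp)⟩
end

section
/- Let b ≥ 3 be an integer, set m = 2b − 1, and let β ∈ (0,1). Define S = { ∑_{n=1}^{∞} a_n · β^{n−1}/m^n : a_n ∈ {0, 1, …, b−2} for all n ≥ 1 } ⊆ ℝ, and set d = log(b−1) / (log m − log β). Then the d-dimensional Hausdorff content of S is strictly positive, and consequently dim_H(S) ≥ d. -/
/-!
The set `S` is mapped onto `[0, 1]` by a Hölder map of exponent `d`: send the point of `S` with
digits `a₀, a₁, …` to the number with the same digits in base `N = b - 1`. With `l = β / m`, two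
points of `S` whose digit sequences first differ at index `k` are at distance at least
`l ^ k / (2 * m)` (`gap`), because `m = 2 * b - 1` makes the gaps between sibling intervals
at least half of their spacing; their images are at distance at most `N⁻¹ ^ k = (l ^ k) ^ d`
(`exists_holder_onto`).

Both conclusions follow. A cover of `S` by balls of radii `rₙ` is carried to a cover of `[0, 1]` by
sets of diameter at most `C * (2 * rₙ) ^ d`, so comparison with Lebesgue measure bounds
`∑ rₙ ^ d` from below (`hausdorffContent_pos`), and a Hölder map of exponent `d` increases the
dimension by a factor of at most `1 / d`, so `1 ≤ dimH S / d`.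
-/

open Set MeasureTheory
open scoped ENNReal

/-- The `d`-dimensional Hausdorff content of a set `E ⊆ ℝ`:
the infimum of `∑ rᵢ^d` over countable covers of `E` by balls (intervals) of radii
`rᵢ > 0`. -/
noncomputable def hausdorffContent (d : ℝ) (E : Set ℝ) : ℝ≥0∞ :=
  ⨅ (c : ℕ → ℝ) (r : ℕ → ℝ) (_ : ∀ n, 0 < r n)
    (_ : E ⊆ ⋃ n, Metric.ball (c n) (r n)),
    ∑' n, ENNReal.ofReal (r n ^ d)

/-- If the digit differences `D` vanish below `k`, are at most `K` and have size at least `1` at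
`k`, then the term of index `k` dominates the tail, which is at most half of it. -/
lemma gap {l K : ℝ} (hl : 0 < l) (hl1 : l < 1) (hK : K * (l / (1 - l)) ≤ 1 / 2)
    {D : ℕ → ℝ} (hD : ∀ n, |D n| ≤ K) {k : ℕ} (h0 : ∀ n < k, D n = 0) (hk : 1 ≤ |D k|) :
    l ^ k / 2 ≤ |∑' n, D n * l ^ n| := by
  have hgeo := summable_geometric_of_lt_one hl.le hl1
  have hsum : Summable fun n => D n * l ^ n := by
    refine Summable.of_norm_bounded (hgeo.mul_left K) fun n => ?_
    rw [Real.norm_eq_abs, abs_mul, abs_of_pos (pow_pos hl n)]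
    exact mul_le_mul_of_nonneg_right (hD n) (by positivity)
  have hsplit := hsum.sum_add_tsum_nat_add (k + 1)
  rw [Finset.sum_range_succ, Finset.sum_eq_zero (fun i hi => by
    rw [h0 i (Finset.mem_range.1 hi), zero_mul]), zero_add] at hsplit
  have htail : |∑' n, D (n + (k + 1)) * l ^ (n + (k + 1))| ≤ l ^ k / 2 := by
    have hg : HasSum (fun n => K * l ^ (k + 1) * l ^ n) (K * l ^ (k + 1) * (1 - l)⁻¹) :=
      (hasSum_geometric_of_lt_one hl.le hl1).mul_left _
    have := tsum_of_norm_bounded (f := fun n => D (n + (k + 1)) * l ^ (n + (k + 1))) hg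
      fun n => by
        rw [Real.norm_eq_abs, abs_mul, abs_of_pos (pow_pos hl _), mul_assoc, ← pow_add,
          add_comm (k + 1)]
        exact mul_le_mul_of_nonneg_right (hD _) (by positivity)
    rw [Real.norm_eq_abs] at this
    refine this.trans ?_
    calc K * l ^ (k + 1) * (1 - l)⁻¹ = l ^ k * (K * (l / (1 - l))) := by
          rw [pow_succ, div_eq_mul_inv]; ring
      _ ≤ l ^ k * (1 / 2) := by gcongr
      _ = l ^ k / 2 := by ring
  have hhead : l ^ k ≤ |D k * l ^ k| := by
    rw [abs_mul, abs_of_pos (pow_pos hl k)]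
    exact le_mul_of_one_le_left (by positivity) hk
  rw [← hsplit]
  have := abs_sub_abs_le_abs_add (D k * l ^ k) (∑' n, D (n + (k + 1)) * l ^ (n + (k + 1)))
  linarith

/-- A set that a Hölder map of exponent `d` sends onto a superset of `[0, 1]` has positive
`d`-dimensional content, by comparison with Lebesgue measure on the target. -/
lemma hausdorffContent_pos {C d : NNReal} {F : ℝ → ℝ} {S : Set ℝ}
    (hF : HolderOnWith C d F S) (hI : Icc 0 1 ⊆ F '' S) : 0 < hausdorffContent d S := by
  set A : ℝ≥0∞ := C * 2 ^ (d : ℝ) with hA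
  have hAt : A ≠ ∞ := by rw [hA]; finiteness
  refine (ENNReal.inv_pos.2 hAt).trans_le ?_
  refine le_iInf fun c => le_iInf fun r => le_iInf fun hr => le_iInf fun hc => ?_
  rw [← one_div]
  refine ENNReal.div_le_of_le_mul' ?_
  rw [← ENNReal.tsum_mul_left]
  calc (1 : ℝ≥0∞) = volume (Icc (0 : ℝ) 1) := by simp
    _ ≤ volume (⋃ n, F '' (Metric.ball (c n) (r n) ∩ S)) := by
      refine measure_mono (hI.trans ?_)
      rintro _ ⟨x, hx, rfl⟩
      obtain ⟨n, hn⟩ := mem_iUnion.1 (hc hx)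
      exact mem_iUnion.2 ⟨n, x, ⟨hn, hx⟩, rfl⟩
    _ ≤ ∑' n, volume (F '' (Metric.ball (c n) (r n) ∩ S)) := measure_iUnion_le _
    _ ≤ ∑' n, A * ENNReal.ofReal (r n ^ (d : ℝ)) := by
      refine ENNReal.tsum_le_tsum fun n => (Real.volume_le_diam _).trans ?_
      have hdiam : Metric.ediam (Metric.ball (c n) (r n)) ≤ 2 * ENNReal.ofReal (r n) := by
        rw [← Metric.eball_ofReal]
        exact Metric.ediam_eball_le
      refine (hF.ediam_image_inter_le_of_le hdiam).trans_eq ?_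
      rw [ENNReal.mul_rpow_of_nonneg _ _ d.coe_nonneg,
        ENNReal.ofReal_rpow_of_pos (hr n), hA, mul_assoc]

/-- Rewriting digits in base `N` maps `S` onto `[0, 1]`, and this map is Hölder. The exponent is
given by the relation `l ^ d = N⁻¹`, and `S` is described with digits in `Fin N`. -/
lemma exists_holder_onto {N : ℕ} (hN : 1 < N) {l m : ℝ} (hl : 0 < l) (hl1 : l < 1) (hm : 0 < m)
    (hK : ((N : ℝ) - 1) * (l / (1 - l)) ≤ 1 / 2) {d : NNReal}
    (hd : l ^ (d : ℝ) = (N : ℝ)⁻¹) :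
    ∃ C : NNReal, ∃ F : ℝ → ℝ,
      HolderOnWith C d F (range fun a : ℕ → Fin N => ∑' n, (a n : ℝ) * l ^ n / m) ∧
      Icc 0 1 ⊆ F '' (range fun a : ℕ → Fin N => ∑' n, (a n : ℝ) * l ^ n / m) := by
  set P : (ℕ → Fin N) → ℝ := fun a => ∑' n, (a n : ℝ) * l ^ n / m with hP
  have hgeo := summable_geometric_of_lt_one hl.le hl1
  have hbd : ∀ (a : ℕ → Fin N) n, (a n : ℝ) ≤ N - 1 := fun a n => by
    have : ((a n : ℕ) : ℝ) + 1 ≤ N := by exact_mod_cast (a n).2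
    linarith
  have hsum : ∀ a : ℕ → Fin N, Summable fun n => (a n : ℝ) * l ^ n := fun a => by
    refine Summable.of_nonneg_of_le (fun n => by positivity) (fun n => ?_)
      (hgeo.mul_left ((N : ℝ) - 1))
    exact mul_le_mul_of_nonneg_right (hbd a n) (by positivity)
  have hdist : ∀ (a a' : ℕ → Fin N) (k : ℕ), (∀ n < k, a n = a' n) → a k ≠ a' k →
      l ^ k ≤ 2 * m * |P a - P a'| := by
    intro a a' k h0 hk
    have hsub : P a - P a' = (∑' n, ((a n : ℝ) - a' n) * l ^ n) / m := by
      simp only [hP, tsum_div_const, sub_mul]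
      rw [(hsum a).tsum_sub (hsum a'), sub_div]
    have := gap hl hl1 hK (D := fun n => (a n : ℝ) - a' n) (k := k)
      (fun n => by
        rw [abs_le]
        have h1 := hbd a n
        have h2 := hbd a' n
        have h3 : (0 : ℝ) ≤ a n := by positivity
        have h4 : (0 : ℝ) ≤ a' n := by positivity
        constructor <;> linarith)
      (fun n hn => by simp [h0 n hn])
      (by
        have h1 : ((a k : ℕ) : ℤ) - ((a' k : ℕ) : ℤ) ≠ 0 := by
          have := Fin.val_ne_of_ne hk
          omega
        exact_mod_cast Int.one_le_abs h1)
    rw [hsub, abs_div, abs_of_pos hm]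
    field_simp
    linarith
  have hholder : ∀ a a' : ℕ → Fin N,
      |Real.ofDigits a - Real.ofDigits a'| ≤ (2 * m * |P a - P a'|) ^ (d : ℝ) := by
    classical
    intro a a'
    by_cases h : a = a'
    · subst h
      rw [sub_self, abs_zero]
      positivity
    have hex : ∃ k, a k ≠ a' k := Function.ne_iff.1 h
    have hmin : ∀ n < Nat.find hex, a n = a' n := fun n hn => not_not.1 (Nat.find_min hex hn)
    calc |Real.ofDigits a - Real.ofDigits a'| ≤ ((N : ℝ) ^ Nat.find hex)⁻¹ :=
          Real.abs_ofDigits_sub_ofDigits_le hmin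
      _ = (l ^ Nat.find hex) ^ (d : ℝ) := by
          rw [← Real.rpow_natCast l, ← Real.rpow_mul hl.le, mul_comm, Real.rpow_mul hl.le, hd,
            Real.rpow_natCast, inv_pow]
      _ ≤ _ := Real.rpow_le_rpow (by positivity)
          (hdist a a' _ hmin (Nat.find_spec hex)) d.coe_nonneg
  have hinj : Function.Injective P := by
    intro a a' h
    by_contra hne
    classical
    have hex : ∃ k, a k ≠ a' k := Function.ne_iff.1 hne
    have := hdist a a' _ (fun n hn => not_not.1 (Nat.find_min hex hn)) (Nat.find_spec hex)
    rw [h, sub_self, abs_zero, mul_zero] at this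
    exact absurd this (not_le.2 (pow_pos hl _))
  -- Points of `S` determine their digits, so `Function.invFun P` reads them off.
  have : Nonempty (ℕ → Fin N) := ⟨fun _ => ⟨0, by omega⟩⟩
  have hinv : ∀ a, Function.invFun P (P a) = a := Function.leftInverse_invFun hinj
  refine ⟨Real.toNNReal ((2 * m) ^ (d : ℝ)), fun x => Real.ofDigits (Function.invFun P x), ?_, ?_⟩
  · rintro _ ⟨a, rfl⟩ _ ⟨a', rfl⟩
    have := ENNReal.ofReal_le_ofReal (hholder a a')
    rw [Real.mul_rpow (by positivity) (abs_nonneg _), ENNReal.ofReal_mul (by positivity),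
      ← ENNReal.ofReal_rpow_of_nonneg (abs_nonneg _) d.coe_nonneg] at this
    simp only [edist_dist, Real.dist_eq]
    rw [hinv, hinv]
    exact this
  · intro y hy
    obtain ⟨a, -, rfl⟩ := Real.ofDigits_SurjOn hN hy
    exact ⟨P a, ⟨a, rfl⟩, by simp only [hinv]⟩

/-- For an integer `b ≥ 3`, `m = 2b − 1`, `β ∈ (0,1)`, the Cantor-like set
`S = { ∑_{n≥1} aₙ·β^{n−1}/mⁿ : aₙ ∈ {0,…,b−2} }` and `d = log(b−1)/(log m − log β)`,
the `d`-dimensional Hausdorff content of `S` is strictly positive, and consequently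
`dim_H(S) ≥ d`. -/
theorem cantor_set_dimH_lower (b : ℕ) (hb : 3 ≤ b) (β : ℝ) (hβ : β ∈ Set.Ioo (0:ℝ) 1)
    (m : ℝ) (hm : m = 2 * (b : ℝ) - 1)
    (S : Set ℝ)
    (hS : S = {y : ℝ | ∃ a : ℕ → ℕ, (∀ n, a n ≤ b - 2) ∧
        y = ∑' n : ℕ, (a n : ℝ) * β ^ n / m ^ (n + 1)})
    (d : ℝ) (hd : d = Real.log ((b : ℝ) - 1) / (Real.log m - Real.log β)) :
    0 < hausdorffContent d S ∧ ENNReal.ofReal d ≤ dimH S := by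
  obtain ⟨hβ0, hβ1⟩ := hβ
  have hbR : (3 : ℝ) ≤ b := by exact_mod_cast hb
  have hm0 : 0 < m := by rw [hm]; linarith
  have hl : 0 < β / m := by positivity
  have hlm : β / m < 1 / m := by gcongr
  have hl1 : β / m < 1 := by rw [div_lt_one hm0, hm]; linarith
  have hcast : ((b - 1 : ℕ) : ℝ) = b - 1 := by rw [Nat.cast_sub (by omega), Nat.cast_one]
  have hK : (((b - 1 : ℕ) : ℝ) - 1) * (β / m / (1 - β / m)) ≤ 1 / 2 := by
    rw [hcast, ← mul_div_assoc, div_le_iff₀ (by linarith), ← sub_nonneg]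
    have : 1 / 2 * (1 - β / m) - ((b : ℝ) - 1 - 1) * (β / m) = (m - (2 * b - 3) * β) / (2 * m) := by
      field_simp
      ring
    rw [this]
    refine div_nonneg ?_ (by positivity)
    rw [hm]
    nlinarith
  have hlog : 0 < Real.log m - Real.log β :=
    sub_pos.2 (Real.log_lt_log hβ0 (by rw [hm]; linarith))
  have hd0 : 0 < d := by
    rw [hd]
    exact div_pos (Real.log_pos (by linarith)) hlog
  -- Mathlib's Hölder exponents live in `ℝ≥0`.
  lift d to NNReal using hd0.le
  have hld : (β / m) ^ (d : ℝ) = ((b - 1 : ℕ) : ℝ)⁻¹ := by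
    rw [hcast, Real.rpow_def_of_pos hl, Real.log_div hβ0.ne' hm0.ne', hd,
      ← Real.exp_log (show (0 : ℝ) < b - 1 by linarith), ← Real.exp_neg,
      Real.exp_log (show (0 : ℝ) < b - 1 by linarith)]
    congr 1
    field_simp
    ring
  have hSrange : S = range fun a : ℕ → Fin (b - 1) => ∑' n, (a n : ℝ) * (β / m) ^ n / m := by
    have hterm : ∀ (x : ℝ) (n : ℕ), x * β ^ n / m ^ (n + 1) = x * (β / m) ^ n / m := by
      intro x n
      rw [div_pow, pow_succ]
      field_simp
    simp only [hS, hterm]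
    ext y
    constructor
    · rintro ⟨a, ha, rfl⟩
      exact ⟨fun n => ⟨a n, by have := ha n; omega⟩, rfl⟩
    · rintro ⟨a, rfl⟩
      exact ⟨fun n => a n, fun n => by have := (a n).2; dsimp only; omega, rfl⟩
  obtain ⟨C, F, hF, hI⟩ := exists_holder_onto (by omega : 1 < b - 1) hl hl1 hm0 hK hld
  rw [← hSrange] at hF hI
  refine ⟨hausdorffContent_pos hF hI, ?_⟩
  have hd0' : 0 < d := by exact_mod_cast hd0
  have hdim : dimH (Icc (0 : ℝ) 1) = 1 := by
    rw [Real.dimH_of_nonempty_interior (by simp)]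
    simp
  have h1 : 1 ≤ dimH S / d := hdim ▸ (dimH_mono hI).trans (hF.dimH_image_le hd0')
  rw [ENNReal.ofReal_coe_nnreal]
  rwa [ENNReal.le_div_iff_mul_le (Or.inl (by simpa using hd0'.ne')) (Or.inl (by simp)),
    one_mul] at h1
end
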